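/- Let A and B be n×n complex matrices with rank(B) ≥ rank(A), Ind(A) = k, Ind(B) = t, rank(A^k) = rank((A^k)~ A^k), and rank(B^t) = rank((B^t)~ B^t). Then A ≤Ⓔ B if and only if A^{k+1} = B A^k and A~ A^k = B~ A^k. -/

import Mathlib

/-!
The condition `rank P = rank (P~ P)` on `P = A^k` makes the indefinite form nondegenerate on the
range of `P`: it yields `Y` with `P = Y P~ P`, and then `Q = P Y~` is a `~`-self-adjoint idempotent
with `Q P = P`, the Minkowski-orthogonal projector onto the range of `P`. Since
`rank A^(k+1) = rank A^k`, `A` maps the range of `A^k` bijectively onto itself, so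
`A^k = A^(k+1) V` for some `V`, and `X = A^k V Y~` satisfies `A X = Q`; the other equations of the
m-core-EP inverse follow by cancelling `A` on the range of `A^k`. Hence the m-core-EP inverse
always exists here (`exists_isMCoreEP`).

Given this inverse `X`, the equality `A X = B X` is equivalent to `A^(k+1) = B A^k`, because `X` and
`A^k` have the same range, and taking `~` of `A X A = A X B` turns `X A = X B` into
`A~ A^k = B~ A^k`, because `A X` is self-adjoint and fixes `A^k`.
-/

open Matrix

noncomputable section

/-- The Minkowski metric matrix `G = diag(1, -1, …, -1)`. -/
def mink (n : ℕ) : Matrix (Fin n) (Fin n) ℂ :=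
  Matrix.diagonal (fun i => if (i : ℕ) = 0 then 1 else -1)

/-- The Minkowski adjoint `A~ = G A* G`. -/
def madj {n : ℕ} (A : Matrix (Fin n) (Fin n) ℂ) : Matrix (Fin n) (Fin n) ℂ :=
  mink n * Aᴴ * mink n

/-- `k` is the index of `A`: the smallest positive integer with
`rank (A^(k+1)) = rank (A^k)`. -/
def IsInd {n : ℕ} (A : Matrix (Fin n) (Fin n) ℂ) (k : ℕ) : Prop :=
  0 < k ∧ (A ^ (k + 1)).rank = (A ^ k).rank ∧
    ∀ j, 0 < j → (A ^ (j + 1)).rank = (A ^ j).rank → k ≤ j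

/-- `X` is an m-core-EP inverse of `A` (with `Ind(A) = k`). -/
def IsMCoreEP {n : ℕ} (A X : Matrix (Fin n) (Fin n) ℂ) (k : ℕ) : Prop :=
  X * A * X = X ∧ X * A ^ (k + 1) = A ^ k ∧ madj (A * X) = A * X ∧
    ∃ Z : Matrix (Fin n) (Fin n) ℂ, X = A ^ k * Z

/-- The m-core-EP order `A ≤Ⓔ B` (for `A` with `Ind(A) = k`): the m-core-EP
inverse `X` of `A` exists and satisfies `X A = X B` and `A X = B X`. -/
def MCoreEPLE {n : ℕ} (A B : Matrix (Fin n) (Fin n) ℂ) (k : ℕ) : Prop :=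
  ∃ X, IsMCoreEP A X k ∧ X * A = X * B ∧ A * X = B * X

lemma mink_mul_mink (n : ℕ) : mink n * mink n = 1 := by
  unfold mink
  rw [diagonal_mul_diagonal, ← diagonal_one]
  congr 1
  funext i
  split_ifs <;> norm_num

lemma mink_conjTranspose (n : ℕ) : (mink n)ᴴ = mink n := by
  unfold mink
  rw [diagonal_conjTranspose]
  congr 1
  funext i
  simp only [Pi.star_apply]
  split_ifs <;> simp

lemma madj_mul {n : ℕ} (A B : Matrix (Fin n) (Fin n) ℂ) :
    madj (A * B) = madj B * madj A := by
  unfold madj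
  calc mink n * (A * B)ᴴ * mink n = mink n * Bᴴ * 1 * Aᴴ * mink n := by
        rw [conjTranspose_mul]; simp only [Matrix.mul_assoc, Matrix.one_mul]
    _ = _ := by rw [← mink_mul_mink]; simp only [Matrix.mul_assoc]

lemma madj_madj {n : ℕ} (A : Matrix (Fin n) (Fin n) ℂ) : madj (madj A) = A := by
  unfold madj
  rw [conjTranspose_mul, conjTranspose_mul, conjTranspose_conjTranspose, mink_conjTranspose]
  calc mink n * (mink n * (A * mink n)) * mink n
      = (mink n * mink n) * A * (mink n * mink n) := by simp only [Matrix.mul_assoc]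
    _ = A := by rw [mink_mul_mink, Matrix.one_mul, Matrix.mul_one]

/-- If `N * M` has the same rank as `N`, then both have the same column space. -/
lemma exists_eq_mul_of_rank {n : ℕ} (N M : Matrix (Fin n) (Fin n) ℂ)
    (h : (N * M).rank = N.rank) : ∃ V, N = N * M * V := by
  have hle : LinearMap.range (N * M).mulVecLin ≤ LinearMap.range N.mulVecLin := by
    rw [mulVecLin_mul]
    exact LinearMap.range_comp_le_range _ _
  have heq : LinearMap.range (N * M).mulVecLin = LinearMap.range N.mulVecLin :=
    Submodule.eq_of_le_of_finrank_eq hle h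
  have hcol : ∀ j, ∃ v, (N * M) *ᵥ v = N *ᵥ Pi.single j 1 := by
    intro j
    have hj : N.mulVecLin (Pi.single j 1) ∈ LinearMap.range (N * M).mulVecLin := by
      rw [heq]
      exact LinearMap.mem_range_self _ _
    exact hj
  choose v hv using hcol
  refine ⟨Matrix.of fun i j => v j i, ?_⟩
  ext i j
  have hij := congrFun (hv j) i
  rw [mulVec_single_one] at hij
  exact hij.symm

/-- If `M * N` has the same rank as `N`, then both have the same row space. -/
lemma exists_eq_mul_of_rank' {n : ℕ} (N M : Matrix (Fin n) (Fin n) ℂ)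
    (h : (M * N).rank = N.rank) : ∃ Y, N = Y * (M * N) := by
  obtain ⟨V, hV⟩ := exists_eq_mul_of_rank Nᵀ Mᵀ (by
    rw [← transpose_mul, rank_transpose, rank_transpose, h])
  refine ⟨Vᵀ, ?_⟩
  have h2 := congrArg transpose hV
  rwa [transpose_mul, transpose_mul, transpose_transpose, transpose_transpose] at h2

/-- When `rank A^(k+1) = rank A^k`, the m-core-EP inverse `X` exists as soon as `A^k` and
`(A^k)~ A^k` have the same rank. The factorization `A X = Y (A^k)~` turns `(A^k)~ A = (A^k)~ B` into
`A X A = A X B`. -/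
lemma exists_isMCoreEP {n k : ℕ} (A : Matrix (Fin n) (Fin n) ℂ)
    (hk : (A ^ (k + 1)).rank = (A ^ k).rank)
    (hA : (A ^ k).rank = (madj (A ^ k) * A ^ k).rank) :
    ∃ X Y, IsMCoreEP A X k ∧ A * X = Y * madj (A ^ k) := by
  obtain ⟨V, hV⟩ := exists_eq_mul_of_rank (A ^ k) A (by rw [← pow_succ, hk])
  obtain ⟨W, hW⟩ := exists_eq_mul_of_rank' (A ^ k) A (by rw [← pow_succ', hk])
  obtain ⟨Y, hY⟩ := exists_eq_mul_of_rank' (A ^ k) (madj (A ^ k)) hA.symm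
  have hcancel : ∀ M, A * (A ^ k * M) = 0 → A ^ k * M = 0 := by
    intro M hM
    rw [hW, Matrix.mul_assoc, Matrix.mul_assoc, hM, Matrix.mul_zero]
  set P := A ^ k with hP
  have hcomm : A * P = P * A := by rw [hP, ← pow_succ, ← pow_succ']
  have hQadj : madj (P * madj Y) = Y * madj P := by rw [madj_mul, madj_madj]
  have hQ : P * madj Y = Y * madj P := by
    have h1 : Y * madj P * (P * madj Y) = P * madj Y := by
      calc Y * madj P * (P * madj Y) = Y * (madj P * P) * madj Y := by
            simp only [Matrix.mul_assoc]
        _ = P * madj Y := by rw [← hY]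
    -- `Q = Q~ Q`, and the right-hand side is self-adjoint.
    have h2 := congrArg madj h1
    rw [madj_mul, hQadj, ← hQadj, madj_madj, hQadj, h1] at h2
    exact h2
  have hQP : P * madj Y * P = P := by
    rw [hQ, Matrix.mul_assoc, ← hY]
  have hAX : A * (P * (V * madj Y)) = P * madj Y := by
    calc A * (P * (V * madj Y)) = P * A * V * madj Y := by
          rw [← hcomm]; simp only [Matrix.mul_assoc]
      _ = P * madj Y := by rw [← hV]
  refine ⟨P * (V * madj Y), Y, ⟨?_, ?_, ?_, V * madj Y, rfl⟩, hAX.trans hQ⟩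
  · have := hcancel (V * madj Y * (A * (P * (V * madj Y))) - V * madj Y) (by
      rw [Matrix.mul_sub, Matrix.mul_sub, ← Matrix.mul_assoc P, ← Matrix.mul_assoc A, hAX,
        ← Matrix.mul_assoc, hQP, sub_self])
    rw [Matrix.mul_sub, sub_eq_zero, ← Matrix.mul_assoc P, ← Matrix.mul_assoc _ A] at this
    exact this
  · have := hcancel (V * madj Y * A ^ (k + 1) - 1) (by
      rw [Matrix.mul_sub, Matrix.mul_sub, ← Matrix.mul_assoc P, ← Matrix.mul_assoc A, hAX,
        pow_succ, ← hP, ← Matrix.mul_assoc, hQP, Matrix.mul_one, hcomm, sub_self])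
    rw [Matrix.mul_sub, sub_eq_zero, ← Matrix.mul_assoc P, Matrix.mul_one] at this
    exact this
  · rw [hAX, hQadj, hQ]

/-- `A ≤Ⓔ B` iff `A^{k+1} = B A^k` and `A~ A^k = B~ A^k`. -/
theorem mCoreEPLE_iff {n k t : ℕ} (A B : Matrix (Fin n) (Fin n) ℂ)
    (hrank : A.rank ≤ B.rank) (hk : IsInd A k) (ht : IsInd B t)
    (hrkA : (A ^ k).rank = (madj (A ^ k) * A ^ k).rank)
    (hrkB : (B ^ t).rank = (madj (B ^ t) * B ^ t).rank) :
    MCoreEPLE A B k ↔ (A ^ (k + 1) = B * A ^ k ∧ madj A * A ^ k = madj B * A ^ k) := by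
  constructor
  · rintro ⟨X, ⟨hXAX, hXA, hadj, -⟩, h1, h2⟩
    have hB : A ^ (k + 1) = B * A ^ k := by
      calc A ^ (k + 1) = A * X * A ^ (k + 1) := by rw [Matrix.mul_assoc, hXA, pow_succ']
        _ = B * A ^ k := by rw [h2, Matrix.mul_assoc, hXA]
    refine ⟨hB, ?_⟩
    obtain ⟨V, hV⟩ := exists_eq_mul_of_rank (A ^ k) A (by rw [← pow_succ, hk.2.1])
    have hfix : A * X * A ^ k = A ^ k := by
      rw [← pow_succ] at hV
      calc A * X * A ^ k = A * (X * A ^ (k + 1)) * V := by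
            rw [hV]
            simp only [Matrix.mul_assoc]
        _ = A ^ k := by rw [hXA, ← pow_succ', ← hV]
    have h3 : madj A * (A * X) = madj B * (A * X) := by
      have h4 : A * X * A = A * X * B := by rw [Matrix.mul_assoc, h1, Matrix.mul_assoc]
      have h5 := congrArg madj h4
      rwa [madj_mul, madj_mul _ B, hadj] at h5
    rw [← hfix, ← Matrix.mul_assoc, h3, Matrix.mul_assoc]
  · rintro ⟨h1, h2⟩
    obtain ⟨X, Y, hX, hAX⟩ := exists_isMCoreEP A hk.2.1 hrkA
    refine ⟨X, hX, ?_, ?_⟩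
    · have h3 : madj (A ^ k) * A = madj (A ^ k) * B := by
        have h4 := congrArg madj h2
        rwa [madj_mul, madj_mul, madj_madj, madj_madj] at h4
      have h5 : A * X * A = A * X * B := by rw [hAX, Matrix.mul_assoc, h3, Matrix.mul_assoc]
      rw [← hX.1, Matrix.mul_assoc X, Matrix.mul_assoc X, h5, Matrix.mul_assoc X]
    · obtain ⟨Z, hZ⟩ := hX.2.2.2
      rw [hZ, ← Matrix.mul_assoc, ← Matrix.mul_assoc, ← h1, pow_succ']
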